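/- arXiv:1506.07420 — 3 statements merged into one kernel-verified Lean document; each statement's English description precedes it below -/
import Mathlib

section
/- There is the following coercivity estimate: if w : ℝ → ℝ is differentiable with w and w' square integrable on ℝ, and ∫_ℝ w(x)·Y₀(x) dx = 0 where Y₀(x) = (1/2)·sech²(x/√2), then ∫_ℝ w'(x)² dx + 2·∫_ℝ w(x)² dx - 3·∫_ℝ sech²(x/√2)·w(x)² dx ≥ (3/7)·( ∫_ℝ w'(x)² dx + ∫_ℝ w(x)² dx ). -/
open MeasureTheory

noncomputable def sech (x : ℝ) : ℝ := 1 / Real.cosh x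

noncomputable def Y0 (x : ℝ) : ℝ := (1 / 2) * sech (x / Real.sqrt 2) ^ 2

open Filter Topology Set

/-- Abstract limit fact: if an integrable-square function has square-integrable derivative,
it tends to zero at both ends. -/
lemma aux_tendsto_zero (w : ℝ → ℝ) (hdiff : Differentiable ℝ w)
    (hw2 : Integrable (fun x => (w x) ^ 2))
    (hw'2 : Integrable (fun x => (deriv w x) ^ 2)) :
    Tendsto w atTop (𝓝 0) ∧ Tendsto w atBot (𝓝 0) := by
  have hd : ∀ x, HasDerivAt (fun x => (w x) ^ 2) (2 * w x * deriv w x) x := by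
    intro x
    have := (hdiff x).hasDerivAt.fun_pow 2
    refine this.congr_deriv ?_
    norm_num
  have hi : Integrable (fun x => 2 * w x * deriv w x) := by
    refine (hw2.add hw'2).mono' ?_ ?_
    · exact ((hdiff.continuous.measurable.const_mul 2).mul (measurable_deriv w)).aestronglyMeasurable
    · refine Eventually.of_forall fun x => ?_
      rw [Real.norm_eq_abs, abs_le]
      simp only [Pi.add_apply]
      constructor <;> nlinarith [sq_nonneg (w x - deriv w x), sq_nonneg (w x + deriv w x)]
  have key : ∀ l : Filter ℝ, Tendsto (fun x => (w x) ^ 2) l (𝓝 0) → Tendsto w l (𝓝 0) := by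
    intro l h
    have h2 := (Real.continuous_sqrt.tendsto 0).comp h
    rw [Real.sqrt_zero] at h2
    refine (tendsto_zero_iff_abs_tendsto_zero _).2 (h2.congr fun x => ?_)
    simp [Real.sqrt_sq_eq_abs]
  refine ⟨key _ ?_, key _ ?_⟩
  · exact tendsto_zero_of_hasDerivAt_of_integrableOn_Ioi (a := 0) (fun x _ => hd x)
      hi.integrableOn hw2.integrableOn
  · exact tendsto_zero_of_hasDerivAt_of_integrableOn_Iic (a := 0) (fun x _ => hd x)
      hi.integrableOn hw2.integrableOn

/-- Spectral gap in abstract form. -/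
lemma aux_gap (w S T : ℝ → ℝ) (s : ℝ) (hs : 0 < s) (hs2 : s ^ 2 = 2)
    (hST : ∀ x, S x = 1 - T x ^ 2) (hSpos : ∀ x, 0 < S x)
    (hT : ∀ x, HasDerivAt T (S x / s) x)
    (hS : ∀ x, HasDerivAt S (-(2 * T x * S x) / s) x)
    (hStop : Tendsto S atTop (𝓝 0)) (hSbot : Tendsto S atBot (𝓝 0))
    (hSint : Integrable S)
    (hdiff : Differentiable ℝ w)
    (hw2 : Integrable (fun x => (w x) ^ 2))
    (hw'2 : Integrable (fun x => (deriv w x) ^ 2))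
    (horth : (∫ x : ℝ, S x * w x) = 0) :
    0 ≤ ∫ x : ℝ, (2 * (deriv w x) ^ 2 + (w x) ^ 2 - 6 * (S x * (w x) ^ 2)) := by
  obtain ⟨hwtop, hwbot⟩ := aux_tendsto_zero w hdiff hw2 hw'2
  have hScont : Continuous S := continuous_iff_continuousAt.2 fun x => (hS x).continuousAt
  have hS1 : ∀ x, S x ≤ 1 := fun x => by rw [hST]; nlinarith [sq_nonneg (T x)]
  have hT1 : ∀ x, |T x| ≤ 1 := fun x => by
    rw [← sq_le_one_iff_abs_le_one]; have := hST x; have := hSpos x; linarith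
  have hSwcont : Continuous (fun x => S x * w x) := hScont.mul hdiff.continuous
  have hSw : Integrable (fun x => S x * w x) := by
    refine (hSint.add hw2).mono' hSwcont.aestronglyMeasurable (Eventually.of_forall fun x => ?_)
    rw [Real.norm_eq_abs, abs_le]
    simp only [Pi.add_apply]
    have := hS1 x
    have := hSpos x
    constructor <;> nlinarith [sq_nonneg (w x - 1/2 * S x), sq_nonneg (w x + 1/2 * S x)]
  have hSw2 : Integrable (fun x => S x * (w x) ^ 2) := by
    refine hw2.mono' (hScont.mul (hdiff.continuous.pow 2)).aestronglyMeasurable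
      (Eventually.of_forall fun x => ?_)
    rw [Real.norm_eq_abs, abs_of_nonneg (mul_nonneg (hSpos x).le (sq_nonneg _))]
    nlinarith [hS1 x, sq_nonneg (w x)]
  set c : ℝ := ∫ x in Iic 0, S x * w x with hc
  have hsum : c + ∫ x in Ioi 0, S x * w x = 0 := by
    rw [hc, intervalIntegral.integral_Iic_add_Ioi hSw.integrableOn hSw.integrableOn, horth]
  set V : ℝ → ℝ := fun y => c + ∫ x in (0:ℝ)..y, S x * w x with hV
  have hVd : ∀ x, HasDerivAt V (S x * w x) x := fun x =>
    (intervalIntegral.integral_hasDerivAt_right (hSwcont.intervalIntegrable _ _)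
      (hSwcont.stronglyMeasurableAtFilter _ _) hSwcont.continuousAt).const_add c
  have hVtop : Tendsto V atTop (𝓝 0) := by
    rw [← hsum]
    exact (intervalIntegral_tendsto_integral_Ioi 0 hSw.integrableOn tendsto_id).const_add c
  have hVbot : Tendsto V atBot (𝓝 0) := by
    have h := (intervalIntegral_tendsto_integral_Iic 0 hSw.integrableOn
      (tendsto_id (x := (atBot : Filter ℝ)))).const_sub c
    rw [← hc, sub_self] at h
    refine h.congr fun x => ?_
    simp only [hV, id]
    rw [intervalIntegral.integral_symm x 0]; ring
  -- quotient limits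
  have hTne : ∀ l : Filter ℝ, Tendsto S l (𝓝 0) → ∀ᶠ x in l, 1 / 2 < T x ^ 2 := by
    intro l h
    filter_upwards [h.eventually (gt_mem_nhds (show (0:ℝ) < 1 / 2 by norm_num))] with x hx
    have := hST x; linarith
  have hne : ∀ l : Filter ℝ, Tendsto S l (𝓝 0) → ∀ᶠ x in l, -(2 * T x * S x) / s ≠ 0 := by
    intro l h
    filter_upwards [hTne l h] with x hx
    have h1 : T x ≠ 0 := by intro h0; rw [h0] at hx; norm_num at hx
    have h2 := (hSpos x).ne'
    have h3 := hs.ne'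
    simp [h1, h2, h3]
  have hquot : ∀ l : Filter ℝ, Tendsto S l (𝓝 0) → Tendsto w l (𝓝 0) →
      Tendsto (fun x => (S x * w x) / (-(2 * T x * S x) / s)) l (𝓝 0) := by
    intro l h hw
    have hb : Tendsto (fun x => s * |w x|) l (𝓝 0) := by
      simpa using (hw.abs).const_mul s
    refine squeeze_zero_norm' ?_ hb
    filter_upwards [hTne l h] with x hx
    have h1 : T x ≠ 0 := by intro h0; rw [h0] at hx; norm_num at hx
    have h2 := (hSpos x).ne'
    have h3 := hs.ne'
    have he : (S x * w x) / (-(2 * T x * S x) / s) = -(s * w x) / (2 * T x) := by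
      field_simp
    have h4 : 1 ≤ |2 * T x| := by
      rw [← one_le_sq_iff_one_le_abs]; nlinarith
    rw [he, Real.norm_eq_abs, abs_div, abs_neg, abs_mul, abs_of_pos hs]
    exact div_le_self (by positivity) h4
  have hqtop : Tendsto (fun x => V x / S x) atTop (𝓝 0) :=
    HasDerivAt.lhopital_zero_atTop (Eventually.of_forall hVd) (Eventually.of_forall hS)
      (hne _ hStop) hVtop hStop (hquot _ hStop hwtop)
  have hqbot : Tendsto (fun x => V x / S x) atBot (𝓝 0) :=
    HasDerivAt.lhopital_zero_atBot (Eventually.of_forall hVd) (Eventually.of_forall hS)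
      (hne _ hSbot) hVbot hSbot (hquot _ hSbot hwbot)
  set v : ℝ → ℝ := fun x => -(V x / S x) / s with hv
  have hvd : ∀ x, HasDerivAt v ((2 * T x * v x - w x) / s) x := by
    intro x
    have h := (((hVd x).fun_div (hS x) (hSpos x).ne').fun_neg).div_const s
    refine h.congr_deriv ?_
    have h2 := (hSpos x).ne'
    have h3 := hs.ne'
    simp only [hv]
    field_simp
    ring
  have hvlim : ∀ l : Filter ℝ, Tendsto (fun x => V x / S x) l (𝓝 0) → Tendsto v l (𝓝 0) := by
    intro l h
    simpa using (h.neg).div_const s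
  set G : ℝ → ℝ := fun x => s * (6 * (w x * v x) - 9 * (T x * v x ^ 2) - 2 * (T x * w x ^ 2)) with hG
  have hTz : ∀ (l : Filter ℝ) (f : ℝ → ℝ), Tendsto f l (𝓝 0) →
      Tendsto (fun x => T x * f x ^ 2) l (𝓝 0) := by
    intro l f hf
    have hb : Tendsto (fun x => f x ^ 2) l (𝓝 0) := by simpa using hf.pow 2
    refine squeeze_zero_norm (fun x => ?_) hb
    rw [Real.norm_eq_abs, abs_mul, abs_of_nonneg (sq_nonneg (f x))]
    nlinarith [hT1 x, sq_nonneg (f x)]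
  have hGlim : ∀ l : Filter ℝ, Tendsto w l (𝓝 0) → Tendsto v l (𝓝 0) → Tendsto G l (𝓝 0) := by
    intro l h1 h2
    have := ((((h1.mul h2).const_mul 6).sub ((hTz l v h2).const_mul 9)).sub
      ((hTz l w h1).const_mul 2)).const_mul s
    simpa using this
  have hGtop := hGlim _ hwtop (hvlim _ hqtop)
  have hGbot := hGlim _ hwbot (hvlim _ hqbot)
  have hGd : ∀ x, HasDerivAt G (6 * s * deriv w x * v x + 6 * w x * (2 * T x * v x - w x)
      - 9 * S x * v x ^ 2 - 18 * T x * v x * (2 * T x * v x - w x) - 2 * S x * w x ^ 2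
      - 4 * s * T x * w x * deriv w x) x := by
    intro x
    have hw := (hdiff x).hasDerivAt
    have h := ((((hw.fun_mul (hvd x)).const_mul 6).fun_sub
      (((hT x).fun_mul ((hvd x).fun_pow 2)).const_mul 9)).fun_sub
      (((hT x).fun_mul (hw.fun_pow 2)).const_mul 2)).const_mul s
    refine h.congr_deriv ?_
    have h3 := hs.ne'
    push_cast
    field_simp
    ring
  have hle : ∀ x, 6 * s * deriv w x * v x + 6 * w x * (2 * T x * v x - w x)
      - 9 * S x * v x ^ 2 - 18 * T x * v x * (2 * T x * v x - w x) - 2 * S x * w x ^ 2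
      - 4 * s * T x * w x * deriv w x
      ≤ 2 * (deriv w x) ^ 2 + (w x) ^ 2 - 6 * (S x * (w x) ^ 2) := by
    intro x
    rw [hST x]
    have h1 := sq_nonneg (s * deriv w x + 2 * T x * w x - 3 * v x)
    have h2 := sq_nonneg (3 * T x * v x - w x)
    have h3 : s ^ 2 * deriv w x ^ 2 = 2 * deriv w x ^ 2 := by rw [hs2]
    linarith
  have hF : Integrable (fun x => 2 * (deriv w x) ^ 2 + (w x) ^ 2 - 6 * (S x * (w x) ^ 2)) :=
    ((hw'2.const_mul 2).add hw2).sub (hSw2.const_mul 6)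
  have hlim := intervalIntegral_tendsto_integral hF tendsto_neg_atTop_atBot
    (tendsto_id (x := (atTop : Filter ℝ)))
  have hlim2 : Tendsto (fun r : ℝ => G r - G (-r)) atTop (𝓝 0) := by
    simpa using hGtop.sub (hGbot.comp tendsto_neg_atTop_atBot)
  refine le_of_tendsto_of_tendsto hlim2 hlim ?_
  filter_upwards [eventually_ge_atTop (0 : ℝ)] with r hr
  exact intervalIntegral.sub_le_integral_of_hasDeriv_right_of_le (by simp; linarith)
    (fun x _ => (hGd x).continuousAt.continuousWithinAt)
    (fun x _ => (hGd x).hasDerivWithinAt) hF.integrableOn (fun x _ => hle x)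

theorem coercivity_orthogonal_to_ground_state
    (w : ℝ → ℝ) (hdiff : Differentiable ℝ w)
    (hw2 : Integrable (fun x => (w x) ^ 2))
    (hw'2 : Integrable (fun x => (deriv w x) ^ 2))
    (horth : (∫ x : ℝ, w x * Y0 x) = 0) :
    (∫ x : ℝ, (deriv w x) ^ 2) + 2 * (∫ x : ℝ, (w x) ^ 2)
        - 3 * (∫ x : ℝ, sech (x / Real.sqrt 2) ^ 2 * (w x) ^ 2)
      ≥ (3 / 7) * ((∫ x : ℝ, (deriv w x) ^ 2) + (∫ x : ℝ, (w x) ^ 2)) := by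
  set s : ℝ := Real.sqrt 2 with hsdef
  have hs : 0 < s := Real.sqrt_pos.2 (by norm_num)
  have hs2 : s ^ 2 = 2 := Real.sq_sqrt (by norm_num)
  set S : ℝ → ℝ := fun x => sech (x / s) ^ 2 with hSdef
  set T : ℝ → ℝ := fun x => Real.sinh (x / s) / Real.cosh (x / s) with hTdef
  have hSpos : ∀ x, 0 < S x := fun x => by
    have := Real.cosh_pos (x / s)
    simp only [hSdef, sech]; positivity
  have hST : ∀ x, S x = 1 - T x ^ 2 := fun x => by
    have h := (Real.cosh_pos (x / s)).ne'
    have h2 := Real.cosh_sq (x / s)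
    simp only [hSdef, hTdef, sech]
    field_simp
    linarith
  have hin : ∀ x : ℝ, HasDerivAt (fun x => x / s) (1 / s) x := fun x => (hasDerivAt_id x).div_const s
  have hT : ∀ x, HasDerivAt T (S x / s) x := fun x => by
    have h := (Real.cosh_pos (x / s)).ne'
    refine ((hin x).sinh.fun_div (hin x).cosh h).congr_deriv ?_
    have h2 := Real.cosh_sq (x / s)
    have h3 := hs.ne'
    simp only [hSdef, sech]
    field_simp
    linarith
  have hS : ∀ x, HasDerivAt S (-(2 * T x * S x) / s) x := fun x => by
    have h : HasDerivAt (fun x => 1 - T x ^ 2) _ x := ((hT x).fun_pow 2).const_sub 1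
    rw [show S = fun x => 1 - T x ^ 2 from funext hST]
    refine h.congr_deriv ?_
    rw [hST x]
    push_cast
    ring
  have hbound : ∀ x, S x ≤ 2 * (1 + x ^ 2)⁻¹ := fun x => by
    have h1 : |x / s| ≤ |Real.sinh (x / s)| := by
      rw [Real.abs_sinh]; exact Real.self_le_sinh_iff.2 (abs_nonneg _)
    have h2 := sq_le_sq.2 h1
    have h3 := Real.cosh_sq (x / s)
    rw [div_pow, hs2] at h2
    have h4 : (1 + x ^ 2) / 2 ≤ Real.cosh (x / s) ^ 2 := by linarith
    have h5 := Real.cosh_pos (x / s)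
    simp only [hSdef, sech]
    rw [div_pow, one_pow, ← div_eq_mul_inv, div_le_div_iff₀ (by positivity) (by positivity)]
    linarith
  have hScont : Continuous S := continuous_iff_continuousAt.2 fun x => (hS x).continuousAt
  have hSint : Integrable S := by
    refine (integrable_inv_one_add_sq.const_mul 2).mono' hScont.aestronglyMeasurable
      (Eventually.of_forall fun x => ?_)
    rw [Real.norm_eq_abs, abs_of_pos (hSpos x)]
    exact hbound x
  have hSlim : ∀ l : Filter ℝ, Tendsto (fun x : ℝ => x ^ 2) l atTop → Tendsto S l (𝓝 0) := by
    intro l h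
    have h1 : Tendsto (fun x : ℝ => 2 * (1 + x ^ 2)⁻¹) l (𝓝 0) := by
      simpa using (tendsto_inv_atTop_zero.comp (tendsto_atTop_add_const_left l 1 h)).const_mul 2
    exact squeeze_zero (fun x => (hSpos x).le) hbound h1
  have hStop := hSlim atTop (tendsto_pow_atTop two_ne_zero)
  have hSbot := hSlim atBot (by
    have := (tendsto_pow_atTop (α := ℝ) two_ne_zero).comp tendsto_neg_atBot_atTop
    simpa [Function.comp_def] using this)
  have horth' : ∫ x, S x * w x = 0 := by
    have h : (fun x => w x * Y0 x) = fun x => (1 / 2) * (S x * w x) := by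
      funext x; simp only [Y0, hSdef, hsdef]; ring
    rw [h, integral_const_mul] at horth
    linarith
  have hgap := aux_gap w S T s hs hs2 hST hSpos hT hS hStop hSbot hSint hdiff hw2 hw'2 horth'
  have hS1 : ∀ x, S x ≤ 1 := fun x => by rw [hST]; nlinarith [sq_nonneg (T x)]
  have hle : ∀ x, S x * (w x) ^ 2 ≤ (w x) ^ 2 := fun x => by
    nlinarith [hS1 x, sq_nonneg (w x)]
  have hSw2 : Integrable (fun x => S x * (w x) ^ 2) := by
    refine hw2.mono' (hScont.mul (hdiff.continuous.pow 2)).aestronglyMeasurable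
      (Eventually.of_forall fun x => ?_)
    rw [Real.norm_eq_abs, abs_of_nonneg (mul_nonneg (hSpos x).le (sq_nonneg _))]
    exact hle x
  have hI1 : Integrable (fun x => 2 * (deriv w x) ^ 2 + (w x) ^ 2) := (hw'2.const_mul 2).add hw2
  rw [integral_sub hI1 (hSw2.const_mul 6),
    integral_add (hw'2.const_mul 2) hw2, integral_const_mul, integral_const_mul] at hgap
  have hmono : ∫ x, S x * (w x) ^ 2 ≤ ∫ x, (w x) ^ 2 := integral_mono hSw2 hw2 hle
  change _ + _ - 3 * (∫ x, S x * (w x) ^ 2) ≥ _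
  linarith
end

section
/- Let F : ℝ → ℝ be a Schwartz function, let k(x) = e^(2ix)·( 1 + (1/2)·sech²(x/√2) + i·√2·tanh(x/√2) ), and let G(x) = (1/12)·Im( k(x)·∫_{-∞}^{x} conj(k(y))·F(y) dy + conj(k(x))·∫_{x}^{+∞} k(y)·F(y) dy ). Then G is a Schwartz function if and only if ∫_ℝ k(x)·F(x) dx = 0. -/
open MeasureTheory

noncomputable def kJost (x : ℝ) : ℂ :=
  Complex.exp (2 * Complex.I * (x : ℂ)) *
    (1 + ((1 / 2 * sech (x / Real.sqrt 2) ^ 2 : ℝ) : ℂ)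
      + Complex.I * (Real.sqrt 2 : ℂ) * ((Real.tanh (x / Real.sqrt 2) : ℝ) : ℂ))

open Filter Topology ContDiff SchwartzMap

lemma tg_of_deriv_seq {E : Type*} [NormedAddCommGroup E] [NormedSpace ℝ E] (g : ℕ → ℝ → E)
    (hd : ∀ n x, HasDerivAt (g n) (g (n + 1) x) x) (hb : ∀ n, ∃ C, ∀ x, ‖g n x‖ ≤ C) :
    (g 0).HasTemperateGrowth := by
  have h : ∀ n, iteratedDeriv n (g 0) = g n := by
    intro n
    induction n with
    | zero => simp
    | succ n ih =>
      rw [iteratedDeriv_succ, ih]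
      ext x
      exact (hd n x).deriv
  refine ⟨contDiff_of_differentiable_iteratedDeriv fun m _ => ?_, fun n => ?_⟩
  · rw [h]
    exact fun x => (hd m x).differentiableAt
  · obtain ⟨C, hC⟩ := hb n
    refine ⟨0, C, fun x => ?_⟩
    rw [norm_iteratedFDeriv_eq_norm_iteratedDeriv, h]
    simpa using hC x

lemma sech_sq (x : ℝ) : sech x ^ 2 = 1 - Real.tanh x ^ 2 := by
  have h := (Real.cosh_pos x).ne'
  rw [sech, Real.tanh_eq_sinh_div_cosh]
  field_simp
  have := Real.cosh_sq x
  linarith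

lemma hasDerivAt_tanh_aux (x : ℝ) : HasDerivAt Real.tanh (1 - Real.tanh x ^ 2) x := by
  have h := (Real.cosh_pos x).ne'
  have h1 := (Real.hasDerivAt_sinh x).div (Real.hasDerivAt_cosh x) h
  have h2 : Real.tanh = Real.sinh / Real.cosh := by
    ext y
    simp [Real.tanh_eq_sinh_div_cosh]
  rw [h2]
  refine h1.congr_deriv ?_
  simp only [Pi.div_apply]
  field_simp

lemma tanh_tg : Real.tanh.HasTemperateGrowth := by
  let P : ℕ → Polynomial ℝ := fun n =>
    (fun p : Polynomial ℝ => Polynomial.derivative p * (1 - Polynomial.X ^ 2))^[n] Polynomial.X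
  have hP : ∀ n, P (n + 1) = Polynomial.derivative (P n) * (1 - Polynomial.X ^ 2) := by
    intro n
    simp only [P, Function.iterate_succ_apply']
  have := tg_of_deriv_seq (fun n x => (P n).eval (Real.tanh x)) ?_ ?_
  · simpa [P] using! this
  · intro n x
    have h := ((P n).hasDerivAt (Real.tanh x)).comp x (hasDerivAt_tanh_aux x)
    simp only [hP]
    simpa using! h
  · intro n
    obtain ⟨C, hC⟩ := (isCompact_Icc (a := (-1 : ℝ)) (b := 1)).exists_bound_of_continuousOn
      (f := fun y => (P n).eval y) (P n).continuous.continuousOn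
    exact ⟨C, fun x => hC _ ⟨(Real.neg_one_lt_tanh x).le, (Real.tanh_lt_one x).le⟩⟩

lemma exp_tg : (fun x : ℝ => Complex.exp (2 * Complex.I * (x : ℂ))).HasTemperateGrowth := by
  have := tg_of_deriv_seq
    (fun n (x : ℝ) => (2 * Complex.I) ^ n * Complex.exp (2 * Complex.I * (x : ℂ))) ?_ ?_
  · simpa using this
  · intro n x
    have h1 : HasDerivAt (fun x : ℝ => 2 * Complex.I * (x : ℂ)) (2 * Complex.I) x := by
      simpa using (Complex.ofRealCLM.hasDerivAt (x := x)).const_mul (2 * Complex.I)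
    refine (h1.cexp.const_mul ((2 * Complex.I) ^ n)).congr_deriv ?_
    ring
  · intro n
    refine ⟨2 ^ n, fun x => ?_⟩
    simp [Complex.norm_exp]

lemma kJost_eq (x : ℝ) : kJost x = Complex.exp (2 * Complex.I * (x : ℂ)) *
    (1 + (1 / 2 : ℂ) * (1 - ((Real.tanh (x * (Real.sqrt 2)⁻¹) : ℝ) : ℂ) ^ 2)
      + Complex.I * (Real.sqrt 2 : ℂ) * ((Real.tanh (x * (Real.sqrt 2)⁻¹) : ℝ) : ℂ)) := by
  rw [kJost, sech_sq, div_eq_mul_inv x]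
  push_cast
  ring

lemma kJost_tg : kJost.HasTemperateGrowth := by
  have h0 : (fun x : ℝ => x * (Real.sqrt 2)⁻¹).HasTemperateGrowth := by fun_prop
  have h1 : (fun x : ℝ => ((Real.tanh (x * (Real.sqrt 2)⁻¹) : ℝ) : ℂ)).HasTemperateGrowth :=
    Function.Complex.hasTemperateGrowth_ofReal.comp (tanh_tg.comp h0)
  have h2 := exp_tg
  rw [funext kJost_eq]
  fun_prop

lemma antideriv_hasDerivAt (h : 𝓢(ℝ, ℂ)) (x : ℝ) :
    HasDerivAt (fun x => ∫ y in Set.Iic x, h y) (h x) x := by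
  have h1 : (fun x => ∫ y in Set.Iic x, h y)
      = fun x => (∫ y in Set.Iic 0, h y) + ∫ y in (0 : ℝ)..x, h y := by
    ext x
    rw [← intervalIntegral.integral_Iic_sub_Iic h.integrable.integrableOn
      h.integrable.integrableOn]
    ring
  rw [h1]
  exact (intervalIntegral.integral_hasDerivAt_right (h.integrable.intervalIntegrable)
    (h.continuous.stronglyMeasurableAtFilter _ _) h.continuous.continuousAt).const_add _

lemma Iic_add_Ici (h : 𝓢(ℝ, ℂ)) (x : ℝ) :
    (∫ y in Set.Iic x, h y) + (∫ y in Set.Ici x, h y) = ∫ y, h y := by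
  rw [integral_Ici_eq_integral_Ioi]
  exact intervalIntegral.integral_Iic_add_Ioi h.integrable.integrableOn
    h.integrable.integrableOn

lemma tail_bound (h : 𝓢(ℝ, ℂ)) (k : ℕ) (x : ℝ) (s : Set ℝ) (hs : MeasurableSet s)
    (hx : ∀ y ∈ s, ‖x‖ ≤ ‖y‖) :
    ‖x‖ ^ k * ‖∫ y in s, h y‖ ≤ ∫ y, ‖y‖ ^ k * ‖h y‖ := by
  have hi := h.integrable_pow_mul volume k
  calc ‖x‖ ^ k * ‖∫ y in s, h y‖ ≤ ‖x‖ ^ k * ∫ y in s, ‖h y‖ := by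
        gcongr
        exact norm_integral_le_integral_norm _
    _ = ∫ y in s, ‖x‖ ^ k * ‖h y‖ := by rw [integral_const_mul]
    _ ≤ ∫ y in s, ‖y‖ ^ k * ‖h y‖ := by
        refine setIntegral_mono_on ((h.integrable.norm.const_mul _).integrableOn)
          hi.integrableOn hs fun y hy => ?_
        have := hx y hy
        gcongr
    _ ≤ _ := setIntegral_le_integral hi (Eventually.of_forall fun y => by positivity)

lemma antideriv_schwartz (h : 𝓢(ℝ, ℂ)) (h0 : ∫ y, h y = 0) :
    ∃ L : 𝓢(ℝ, ℂ), ∀ x, L x = ∫ y in Set.Iic x, h y := by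
  have hder : deriv (fun x => ∫ y in Set.Iic x, h y) = h :=
    funext fun x => (antideriv_hasDerivAt h x).deriv
  refine ⟨⟨fun x => ∫ y in Set.Iic x, h y, ?_, ?_⟩, fun x => rfl⟩
  · rw [contDiff_infty_iff_deriv, hder]
    exact ⟨fun x => (antideriv_hasDerivAt h x).differentiableAt, h.smooth'⟩
  · intro k n
    rcases n with _ | n
    · refine ⟨∫ y, ‖y‖ ^ k * ‖h y‖, fun x => ?_⟩
      rw [norm_iteratedFDeriv_zero]
      rcases le_total x 0 with hx | hx
      · refine tail_bound h k x _ measurableSet_Iic fun y hy => ?_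
        have hy : y ≤ x := hy
        rw [Real.norm_eq_abs, Real.norm_eq_abs, abs_of_nonpos hx, abs_of_nonpos (hy.trans hx)]
        linarith
      · have h2 := Iic_add_Ici h x
        rw [h0] at h2
        rw [eq_neg_of_add_eq_zero_left h2, norm_neg]
        refine tail_bound h k x _ measurableSet_Ici fun y hy => ?_
        have hy : x ≤ y := hy
        rw [Real.norm_eq_abs, Real.norm_eq_abs, abs_of_nonneg hx, abs_of_nonneg (hx.trans hy)]
        exact hy
    · obtain ⟨C, hC⟩ := h.decay' k n
      refine ⟨C, fun x => ?_⟩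
      have := hC x
      rw [norm_iteratedFDeriv_eq_norm_iteratedDeriv] at this ⊢
      rw [iteratedDeriv_succ', hder]
      exact this

lemma tendsto_tanh_aux : Tendsto Real.tanh atTop (𝓝 1) := by
  have h : Real.tanh = fun x => (1 - Real.exp (-x) ^ 2) / (1 + Real.exp (-x) ^ 2) := by
    ext x
    rw [Real.tanh_eq, Real.exp_neg]
    have := (Real.exp_pos x).ne'
    field_simp
  rw [h]
  have h1 : Tendsto (fun x => Real.exp (-x)) atTop (𝓝 0) := Real.tendsto_exp_neg_atTop_nhds_zero
  have := ((h1.pow 2).const_sub 1).div ((h1.pow 2).const_add 1) (by norm_num)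
  simpa using! this

lemma tendsto_kJost (θ : ℝ) : Tendsto (fun n : ℕ => kJost (n * Real.pi + θ)) atTop
    (𝓝 (Complex.exp (2 * Complex.I * θ) * (1 + Complex.I * (Real.sqrt 2 : ℂ)))) := by
  have hx : Tendsto (fun n : ℕ => ((n : ℝ) * Real.pi + θ) * (Real.sqrt 2)⁻¹) atTop atTop :=
    ((tendsto_atTop_add_const_right _ _
      (tendsto_natCast_atTop_atTop.atTop_mul_const Real.pi_pos))).atTop_mul_const
      (by positivity)
  have ht : Tendsto (fun n : ℕ => ((Real.tanh (((n : ℝ) * Real.pi + θ) * (Real.sqrt 2)⁻¹) : ℝ) : ℂ))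
      atTop (𝓝 1) := by
    have := (Complex.continuous_ofReal.tendsto 1).comp (tendsto_tanh_aux.comp hx)
    rw [Complex.ofReal_one] at this
    exact this
  have he : ∀ n : ℕ, Complex.exp (2 * Complex.I * (((n : ℝ) * Real.pi + θ : ℝ) : ℂ))
      = Complex.exp (2 * Complex.I * θ) := by
    intro n
    rw [Complex.exp_eq_exp_iff_exists_int]
    refine ⟨n, ?_⟩
    push_cast
    ring
  simp only [kJost_eq, he]
  have := ((((ht.pow 2).const_sub 1).const_mul (1 / 2 : ℂ)).const_add 1).add
    (ht.const_mul (Complex.I * (Real.sqrt 2 : ℂ)))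
  have := this.const_mul (Complex.exp (2 * Complex.I * θ))
  simpa using! this

theorem schwartz_solution_iff_orthogonality
    (F : SchwartzMap ℝ ℝ)
    (G : ℝ → ℝ)
    (hG : ∀ x : ℝ, G x = (1 / 12) *
      (kJost x * (∫ y in Set.Iic x, (starRingEnd ℂ) (kJost y) * (F y : ℂ))
        + (starRingEnd ℂ) (kJost x) * (∫ y in Set.Ici x, kJost y * (F y : ℂ))).im) :
    (∃ S : SchwartzMap ℝ ℝ, ∀ x : ℝ, S x = G x) ↔ (∫ x : ℝ, kJost x * (F x : ℂ)) = 0 := by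
  obtain ⟨h, hh⟩ : ∃ h : 𝓢(ℝ, ℂ), ∀ x, h x = kJost x * (F x : ℂ) := by
    refine ⟨SchwartzMap.bilinLeftCLM (ContinuousLinearMap.lsmul ℝ ℝ) kJost_tg F, fun x => ?_⟩
    simp [SchwartzMap.bilinLeftCLM_apply, mul_comm]
  have hA : ∀ x, (∫ y in Set.Iic x, (starRingEnd ℂ) (kJost y) * (F y : ℂ))
      = (starRingEnd ℂ) (∫ y in Set.Iic x, h y) := by
    intro x
    rw [← integral_conj]
    simp [hh]
  simp only [← hh] at hG ⊢
  have hG2 : ∀ x, G x = (1 / 12) * (2 * (kJost x * (starRingEnd ℂ) (∫ y in Set.Iic x, h y)).im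
      - (kJost x * (starRingEnd ℂ) (∫ y, h y)).im) := by
    intro x
    rw [hG, hA, ← Iic_add_Ici h x]
    simp only [Complex.add_im, Complex.mul_im, Complex.conj_re, Complex.conj_im, Complex.add_re,
      map_add]
    ring
  constructor
  · rintro ⟨S, hS⟩
    have key : ∀ θ : ℝ, (Complex.exp (2 * Complex.I * θ) * (1 + Complex.I * (Real.sqrt 2 : ℂ))
        * (starRingEnd ℂ) (∫ y, h y)).im = 0 := by
      intro θ
      have hx : Tendsto (fun n : ℕ => (n : ℝ) * Real.pi + θ) atTop atTop :=
        tendsto_atTop_add_const_right _ _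
          (tendsto_natCast_atTop_atTop.atTop_mul_const Real.pi_pos)
      have hL := (aecover_Iic (μ := volume) hx).integral_tendsto_of_countably_generated
        h.integrable
      have hk := tendsto_kJost θ
      have hLc := (Complex.continuous_conj.tendsto _).comp hL
      have t1 := (Complex.continuous_im.tendsto _).comp (hk.mul hLc)
      have t2 := (Complex.continuous_im.tendsto _).comp
        (hk.mul_const ((starRingEnd ℂ) (∫ y, h y)))
      have t3 := ((t1.const_mul 2).sub t2).const_mul (1 / 12 : ℝ)
      have t4 : Tendsto (fun n : ℕ => G ((n : ℝ) * Real.pi + θ)) atTop (𝓝 0) := by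
        have := (S.tendsto_cocompact.mono_left atTop_le_cocompact).comp hx
        refine this.congr fun n => ?_
        simp [hS]
      have t5 := tendsto_nhds_unique (t4.congr fun n => hG2 _) t3
      linarith
    have k0 := key 0
    have k1 := key (Real.pi / 4)
    have e1 : Complex.exp (2 * Complex.I * ((Real.pi / 4 : ℝ) : ℂ)) = Complex.I := by
      have e2 : 2 * Complex.I * ((Real.pi / 4 : ℝ) : ℂ) = Real.pi / 2 * Complex.I := by
        push_cast
        ring
      rw [e2, Complex.exp_pi_div_two_mul_I]
    rw [e1, mul_assoc, Complex.I_mul_im] at k1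
    simp only [Complex.ofReal_zero, mul_zero, Complex.exp_zero, one_mul] at k0
    have := Complex.ext (z := _) (w := 0) k1 k0
    rcases mul_eq_zero.1 this with h1 | h1
    · have := congrArg Complex.re h1
      simp at this
    · simpa using h1
  · intro h0
    obtain ⟨L, hL⟩ := antideriv_schwartz h h0
    let M : 𝓢(ℝ, ℂ) := SchwartzMap.smulLeftCLM ℂ kJost
      (SchwartzMap.postcompCLM (𝕜 := ℝ) (Complex.conjCLE : ℂ →L[ℝ] ℂ) L)
    refine ⟨(1 / 6 : ℝ) • SchwartzMap.postcompCLM (𝕜 := ℝ) Complex.imCLM M, fun x => ?_⟩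
    rw [hG2, h0, ← hL]
    simp [M, SchwartzMap.smulLeftCLM_apply_apply kJost_tg]
    ring
end

section
/- The Fermi Golden Rule holds for the φ⁴ kink: with H(x) = tanh(x/√2), Y₁(x) = 2^(-3/4)·√3·tanh(x/√2)·sech(x/√2), and k(x) = e^(2ix)·( 1 + (1/2)·sech²(x/√2) + i·√2·tanh(x/√2) ), one has ∫_ℝ Im(k(x))·H(x)·Y₁(x)² dx ≠ 0. -/
open MeasureTheory

noncomputable def Hkink (x : ℝ) : ℝ := Real.tanh (x / Real.sqrt 2)

noncomputable def Y1 (x : ℝ) : ℝ :=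
  (2 : ℝ) ^ (-(3 : ℝ) / 4) * Real.sqrt 3 * Real.tanh (x / Real.sqrt 2) * sech (x / Real.sqrt 2)

noncomputable def lf (x : ℝ) : ℝ := Real.exp (Real.sqrt 2 * x) / (1 + Real.exp (Real.sqrt 2 * x))

noncomputable def gP (t : ℝ) : ℂ :=
  ((2 * (t : ℂ) - 1) ^ 3 * (1 + 2 * t - 2 * t ^ 2) + Complex.I * (Real.sqrt 2 : ℂ) * (2 * t - 1) ^ 4)

noncomputable def gW (t : ℝ) : ℂ :=
  (t : ℂ) ^ (Complex.I * (Real.sqrt 2 : ℂ)) * (1 - (t : ℂ)) ^ (-(Complex.I * (Real.sqrt 2 : ℂ)))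

lemma lf_deriv (x : ℝ) : HasDerivAt lf (Real.sqrt 2 * (lf x * (1 - lf x))) x := by
  have h1 : HasDerivAt (fun x : ℝ => Real.exp (Real.sqrt 2 * x))
      (Real.exp (Real.sqrt 2 * x) * (Real.sqrt 2 * 1)) x :=
    ((hasDerivAt_id x).const_mul (Real.sqrt 2)).exp
  have hp := Real.exp_pos (Real.sqrt 2 * x)
  have h2 := h1.div (h1.const_add 1) (by positivity)
  refine h2.congr_deriv ?_
  unfold lf
  field_simp

lemma lf_pos (x : ℝ) : 0 < lf x := by unfold lf; positivity

lemma lf_one_sub (x : ℝ) : 1 - lf x = 1 / (1 + Real.exp (Real.sqrt 2 * x)) := by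
  have hp := Real.exp_pos (Real.sqrt 2 * x)
  unfold lf; field_simp; ring

lemma lf_one_sub_pos (x : ℝ) : 0 < 1 - lf x := by
  rw [lf_one_sub]; positivity

lemma lf_inj : Function.Injective lf := by
  apply StrictMono.injective
  apply strictMono_of_deriv_pos
  intro x
  rw [(lf_deriv x).deriv]
  have := lf_pos x
  have := lf_one_sub_pos x
  positivity

lemma lf_image : lf '' Set.univ = Set.Ioo 0 1 := by
  ext t
  constructor
  · rintro ⟨x, -, rfl⟩
    exact ⟨lf_pos x, by linarith [lf_one_sub_pos x]⟩
  · rintro ⟨h0, h1⟩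
    have h2 : 0 < 1 - t := by linarith
    refine ⟨Real.log (t / (1 - t)) / Real.sqrt 2, trivial, ?_⟩
    unfold lf
    rw [mul_div_cancel₀ _ (by positivity), Real.exp_log (by positivity)]
    field_simp
    ring

lemma lf_tanh (x : ℝ) : Real.tanh (x / Real.sqrt 2) = 2 * lf x - 1 ∧
    sech (x / Real.sqrt 2) ^ 2 = 4 * (lf x * (1 - lf x)) := by
  have hs : Real.sqrt 2 * x = x / Real.sqrt 2 + x / Real.sqrt 2 := by
    have : Real.sqrt 2 * Real.sqrt 2 = 2 := Real.mul_self_sqrt (by norm_num)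
    field_simp
    rw [pow_two, this]; ring
  have hp := Real.exp_pos (x / Real.sqrt 2)
  rw [lf_one_sub]
  unfold lf sech
  rw [Real.tanh_eq_sinh_div_cosh, Real.sinh_eq, Real.cosh_eq, hs, Real.exp_add, Real.exp_neg]
  constructor
  · field_simp
    ring
  · field_simp
    ring

lemma gW_lf (x : ℝ) : gW (lf x) = Complex.exp (2 * Complex.I * (x : ℂ)) := by
  have h0 := lf_pos x
  have h1 := lf_one_sub_pos x
  have hl : Real.log (lf x) - Real.log (1 - lf x) = Real.sqrt 2 * x := by
    rw [← Real.log_div h0.ne' h1.ne', lf_one_sub]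
    have hp := Real.exp_pos (Real.sqrt 2 * x)
    have : lf x / (1 / (1 + Real.exp (Real.sqrt 2 * x))) = Real.exp (Real.sqrt 2 * x) := by
      unfold lf; field_simp
    rw [this, Real.log_exp]
  have hl' : (Real.log (lf x) : ℂ) - (Real.log (1 - lf x) : ℂ) = (Real.sqrt 2 : ℂ) * x := by
    exact_mod_cast hl
  have hs : (Real.sqrt 2 : ℂ) * (Real.sqrt 2 : ℂ) = 2 := by
    exact_mod_cast Real.mul_self_sqrt (by norm_num : (0:ℝ) ≤ 2)
  unfold gW
  have e : (1 - (lf x : ℂ)) = ((1 - lf x : ℝ) : ℂ) := by push_cast; rfl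
  rw [e, Complex.cpow_def_of_ne_zero (by exact_mod_cast h0.ne'),
    Complex.cpow_def_of_ne_zero (by exact_mod_cast h1.ne'), ← Complex.exp_add,
    ← Complex.ofReal_log h0.le, ← Complex.ofReal_log h1.le]
  congr 1
  linear_combination (Complex.I * (Real.sqrt 2 : ℂ)) * hl' + Complex.I * x * hs

lemma integrand_eq (x : ℝ) : (kJost x).im * Hkink x * (Y1 x) ^ 2 =
    3 * (|Real.sqrt 2 * (lf x * (1 - lf x))| • (gW (lf x) * gP (lf x)).im) := by
  obtain ⟨ht, hs⟩ := lf_tanh x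
  have h0 := lf_pos x
  have h1 := lf_one_sub_pos x
  have hr : ((2 : ℝ) ^ (-(3 : ℝ) / 4)) ^ 2 = Real.sqrt 2 / 4 := by
    rw [← Real.rpow_natCast, ← Real.rpow_mul (by norm_num), Real.sqrt_eq_rpow,
      show (4 : ℝ) = 2 ^ (2 : ℝ) by norm_num, ← Real.rpow_sub (by norm_num)]
    norm_num
  have h3 : Real.sqrt 3 ^ 2 = 3 := Real.sq_sqrt (by norm_num)
  have hY : Y1 x ^ 2 = 3 * Real.sqrt 2 * (2 * lf x - 1) ^ 2 * (lf x * (1 - lf x)) := by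
    unfold Y1
    rw [mul_pow, mul_pow, mul_pow, hr, h3, hs, ht]; ring
  have hg : gW (lf x) * gP (lf x) = kJost x * (((2 * lf x - 1) ^ 3 : ℝ) : ℂ) := by
    rw [gW_lf]
    unfold kJost gP
    rw [hs, ht]
    push_cast
    ring
  rw [hg, Complex.im_mul_ofReal, hY, abs_of_pos (by positivity)]
  unfold Hkink
  rw [ht, smul_eq_mul]
  ring

noncomputable def bI (j : ℕ) (t : ℝ) : ℂ :=
  (t : ℂ) ^ ((1 + j + Complex.I * (Real.sqrt 2 : ℂ)) - 1) *
    (1 - (t : ℂ)) ^ ((1 - Complex.I * (Real.sqrt 2 : ℂ)) - 1)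

lemma bI_eq (j : ℕ) (t : ℝ) (ht : 0 < t) : bI j t = gW t * (t : ℂ) ^ j := by
  unfold bI gW
  have h : (t : ℂ) ≠ 0 := by exact_mod_cast ht.ne'
  rw [show (1 + (j : ℂ) + Complex.I * (Real.sqrt 2 : ℂ)) - 1
    = Complex.I * (Real.sqrt 2 : ℂ) + j by ring, Complex.cpow_add _ _ h, Complex.cpow_natCast]
  rw [show (1 - Complex.I * (Real.sqrt 2 : ℂ)) - 1 = -(Complex.I * (Real.sqrt 2 : ℂ)) by ring]
  ring

lemma bI_int (j : ℕ) : IntervalIntegrable (bI j) volume 0 1 :=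
  Complex.betaIntegral_convergent (by simp; positivity) (by simp)

noncomputable def Gz : ℂ :=
  Complex.Gamma (1 + Complex.I * (Real.sqrt 2 : ℂ)) * Complex.Gamma (1 - Complex.I * (Real.sqrt 2 : ℂ))

noncomputable def bV (j : ℕ) : ℂ := ∫ t in (0:ℝ)..1, bI j t

lemma bV_gamma (j : ℕ) : Complex.Gamma (1 + j + Complex.I * (Real.sqrt 2 : ℂ)) *
    Complex.Gamma (1 - Complex.I * (Real.sqrt 2 : ℂ)) = Complex.Gamma (j + 1 + 1) * bV j := by
  have := Complex.Gamma_mul_Gamma_eq_betaIntegral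
    (s := 1 + j + Complex.I * (Real.sqrt 2 : ℂ)) (t := 1 - Complex.I * (Real.sqrt 2 : ℂ))
    (by simp; positivity) (by simp)
  rw [this]
  congr 2
  ring

lemma bV_zero : bV 0 = Gz := by
  have := bV_gamma 0
  have e : Complex.Gamma (1 + 1) = 1 := by rw [Complex.Gamma_add_one _ one_ne_zero]; simp
  simp [e] at this
  rw [← this, Gz]

lemma bV_succ (j : ℕ) : ((j : ℂ) + 2) * bV (j + 1) =
    (1 + j + Complex.I * (Real.sqrt 2 : ℂ)) * bV j := by
  have h0 := bV_gamma j
  have h1 := bV_gamma (j + 1)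
  have hne : (1 + j + Complex.I * (Real.sqrt 2 : ℂ)) ≠ 0 := by
    intro h
    have := congrArg Complex.re h
    simp at this
    have : (0:ℝ) ≤ j := Nat.cast_nonneg j
    linarith
  have hne2 : (j : ℂ) + 1 + 1 ≠ 0 := by exact_mod_cast Nat.succ_ne_zero (j + 1)
  have hG : Complex.Gamma ((j : ℂ) + 1 + 1) ≠ 0 := by
    apply Complex.Gamma_ne_zero_of_re_pos
    simp; positivity
  push_cast at h1
  rw [show (1 + ((j : ℂ) + 1) + Complex.I * (Real.sqrt 2 : ℂ))
    = (1 + j + Complex.I * (Real.sqrt 2 : ℂ)) + 1 by ring, Complex.Gamma_add_one _ hne,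
    Complex.Gamma_add_one _ hne2, mul_assoc, h0] at h1
  apply mul_left_cancel₀ hG
  linear_combination -h1

lemma Gz_real : Gz = ((Complex.normSq (Complex.Gamma (1 + Complex.I * (Real.sqrt 2 : ℂ))) : ℝ) : ℂ) := by
  rw [Complex.normSq_eq_conj_mul_self, ← Complex.Gamma_conj]
  simp [Gz]
  rw [mul_comm]
  rfl

lemma Gz_pos : 0 < Complex.normSq (Complex.Gamma (1 + Complex.I * (Real.sqrt 2 : ℂ))) := by
  rw [Complex.normSq_pos]
  apply Complex.Gamma_ne_zero_of_re_pos
  simp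

noncomputable def pc : Fin 6 → ℂ :=
  ![-1 + Complex.I * (Real.sqrt 2 : ℂ), 4 - 8 * (Complex.I * (Real.sqrt 2 : ℂ)),
    2 + 24 * (Complex.I * (Real.sqrt 2 : ℂ)), -28 - 32 * (Complex.I * (Real.sqrt 2 : ℂ)),
    40 + 16 * (Complex.I * (Real.sqrt 2 : ℂ)), -16]

lemma gWP_eq (t : ℝ) (ht : 0 < t) : gW t * gP t = ∑ j : Fin 6, pc j * bI j t := by
  simp only [bI_eq _ t ht]
  simp [Fin.sum_univ_succ, pc, gP]
  ring

lemma gWP_int : IntervalIntegrable (fun t => ∑ j : Fin 6, pc j * bI j t) volume 0 1 := by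
  have := IntervalIntegrable.sum (μ := volume) (a := 0) (b := 1) Finset.univ
    (f := fun (j : Fin 6) t => pc j * bI j t) (fun j _ => (bI_int j).const_mul (pc j))
  have e : (fun t => ∑ j : Fin 6, pc j * bI j t) = ∑ j : Fin 6, (fun t => pc j * bI j t) := by
    ext t
    simp
  rw [e]
  exact this

lemma total : ∫ t in (0:ℝ)..1, ∑ j : Fin 6, pc j * bI j t = ∑ j : Fin 6, pc j * bV j := by
  rw [intervalIntegral.integral_finsetSum (fun (j : Fin 6) _ => (bI_int j).const_mul (pc j))]
  simp only [intervalIntegral.integral_const_mul]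
  rfl

lemma value : ∑ j : Fin 6, pc j * bV j =
    ((0) + (-1/2) * (Complex.I * (Real.sqrt 2 : ℂ))) * Gz := by
  have hs : (Complex.I * (Real.sqrt 2 : ℂ)) ^ 2 = -2 := by
    rw [mul_pow, Complex.I_sq]
    have : (Real.sqrt 2 : ℂ) ^ 2 = 2 := by
      exact_mod_cast Real.sq_sqrt (by norm_num : (0:ℝ) ≤ 2)
    rw [this]; ring
  have h0 := bV_zero
  have h1 := bV_succ 0
  have h2 := bV_succ 1
  have h3 := bV_succ 2
  have h4 := bV_succ 3
  have h5 := bV_succ 4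
  have hsum : ∀ f : Fin 6 → ℂ, ∑ j, f j = f 0 + f 1 + f 2 + f 3 + f 4 + f 5 := by
    intro f; exact Fin.sum_univ_six f
  rw [hsum]
  simp [pc]
  generalize Complex.I * (Real.sqrt 2 : ℂ) = z at *
  norm_num at h1 h2 h3 h4 h5
  have g0 : bV 0 = (1 + 0 * z) * Gz := by rw [h0]; ring
  have g1 : bV 1 = (1/2 + (1/2) * z) * Gz := by
    have e : (2 : ℂ) ≠ 0 := by norm_num
    apply mul_left_cancel₀ e
    linear_combination h1 + (1 + 0 + z) * g0 + (0) * Gz * hs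
  have g2 : bV 2 = (0 + (1/2) * z) * Gz := by
    have e : (3 : ℂ) ≠ 0 := by norm_num
    apply mul_left_cancel₀ e
    linear_combination h2 + (1 + 1 + z) * g1 + (1/2) * Gz * hs
  have g3 : bV 3 = (-1/4 + (3/8) * z) * Gz := by
    have e : (4 : ℂ) ≠ 0 := by norm_num
    apply mul_left_cancel₀ e
    linear_combination h3 + (1 + 2 + z) * g2 + (1/2) * Gz * hs
  have g4 : bV 4 = (-7/20 + (1/4) * z) * Gz := by
    have e : (5 : ℂ) ≠ 0 := by norm_num
    apply mul_left_cancel₀ e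
    linear_combination h4 + (1 + 3 + z) * g3 + (3/8) * Gz * hs
  have g5 : bV 5 = (-3/8 + (3/20) * z) * Gz := by
    have e : (6 : ℂ) ≠ 0 := by norm_num
    apply mul_left_cancel₀ e
    linear_combination h5 + (1 + 4 + z) * g4 + (1/4) * Gz * hs
  rw [g0, g1, g2, g3, g4, g5]
  ring
theorem fermi_golden_rule :
    (∫ x : ℝ, (kJost x).im * Hkink x * (Y1 x) ^ 2) ≠ 0 := by
  have hcv := integral_image_eq_integral_abs_deriv_smul (s := Set.univ) MeasurableSet.univ
    (fun x _ => (lf_deriv x).hasDerivWithinAt) lf_inj.injOn (fun t => (gW t * gP t).im)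
  rw [lf_image, setIntegral_univ] at hcv
  simp only [integrand_eq]
  rw [integral_const_mul, ← hcv]
  have h1 : ∫ t in Set.Ioo (0:ℝ) 1, (gW t * gP t).im
      = ∫ t in Set.Ioo (0:ℝ) 1, (∑ j : Fin 6, pc j * bI j t).im := by
    apply setIntegral_congr_fun measurableSet_Ioo
    intro t ht
    simp only [gWP_eq t ht.1]
  have hint : IntegrableOn (fun t => ∑ j : Fin 6, pc j * bI j t) (Set.Ioo (0:ℝ) 1) volume := by
    rw [← intervalIntegrable_iff_integrableOn_Ioo_of_le zero_le_one]
    exact gWP_int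
  have h2 : ∫ t in Set.Ioo (0:ℝ) 1, (∑ j : Fin 6, pc j * bI j t).im
      = (∫ t in Set.Ioo (0:ℝ) 1, ∑ j : Fin 6, pc j * bI j t).im :=
    integral_im hint
  rw [h1, h2, ← integral_Ioc_eq_integral_Ioo, ← intervalIntegral.integral_of_le zero_le_one,
    total, value, Gz_real, Complex.im_mul_ofReal]
  have hp := Gz_pos
  have h3 : 0 < Real.sqrt 2 := by positivity
  simp
  exact fun h => hp.ne' (by simp [h])
end
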